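/- Let L ∈ ℝ^{N×N} satisfy the EEP condition with respect to a partition of the N nodes into k nonempty clusters with indicator matrix Q, and set B = (QᵀQ)^{-1} Qᵀ L Q ∈ ℝ^{k×k}. Let σ ∈ ℝ and F, H : ℝ^m → ℝ^m be arbitrary maps, and let G(x)_i = F(x_i) − σ Σ_{j=1}^N L_{ij} H(x_j) be the coupled vector field on (ℝ^m)^N. Then for every s ∈ (ℝ^m)^k, the cluster-constant state x defined by x_i = s_{c(i)} satisfies G(x)_i = F(s_{c(i)}) − σ Σ_{β=1}^k B_{c(i),β} H(s_β) for all nodes i; that is, the full network dynamics reduce to the quotient dynamics governed by B. -/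

import Mathlib

open Matrix BigOperators

/-! A matrix whose row sums over each cluster are constant on clusters maps the column space of
the indicator matrix `Q` into itself, so `L * Q = Q * A` for some `A`. Invertible cluster sizes
make `(Qᵀ * Q)⁻¹ * Qᵀ` a left inverse of `Q`, which forces `A = B`. Finally, coupling through `L`
to a cluster-constant state only sees `L * Q = Q * B`, whose row at node `i` is row `c i` of `B`.
-/

section ClusterIndicator

variable {V C R E : Type*} [DecidableEq C]

/-- The indicator matrix `Q` of the partition of the nodes `V` into the fibres of the
cluster-assignment map `c`, encoded as the identity matrix with its rows pulled back along `c`. -/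
def clusterIndicator (R : Type*) [Zero R] [One R] (c : V → C) : Matrix V C R :=
  (1 : Matrix C C R).submatrix c id

theorem clusterIndicator_apply [Zero R] [One R] (c : V → C) (j : V) (l : C) :
    clusterIndicator R c j l = if c j = l then 1 else 0 :=
  Matrix.one_apply

theorem clusterIndicator_mul_apply [Fintype C] [NonAssocSemiring R] {W : Type*} (c : V → C)
    (A : Matrix C W R) (i : V) (w : W) : (clusterIndicator R c * A) i w = A (c i) w := by
  simp only [mul_apply, clusterIndicator_apply, ite_mul, one_mul, zero_mul, Finset.sum_ite_eq,
    Finset.mem_univ, if_true]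

variable [Fintype V]

theorem mul_clusterIndicator_apply [NonAssocSemiring R] {W : Type*} (L : Matrix W V R)
    (c : V → C) (w : W) (β : C) :
    (L * clusterIndicator R c) w β = ∑ p with c p = β, L w p := by
  simp only [mul_apply, clusterIndicator_apply, mul_ite, mul_one, mul_zero, Finset.sum_filter]

theorem sum_smul_comp_eq_sum_mul_clusterIndicator_smul [Fintype C] [Semiring R]
    [AddCommMonoid E] [Module R E] {W : Type*} (L : Matrix W V R) (c : V → C) (f : C → E)
    (w : W) :
    ∑ j, L w j • f (c j) = ∑ β, (L * clusterIndicator R c) w β • f β := by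
  simp only [mul_clusterIndicator_apply, Finset.sum_smul]
  rw [← Finset.sum_fiberwise Finset.univ c]
  refine Finset.sum_congr rfl fun β _ => Finset.sum_congr rfl fun p hp => ?_
  rw [(Finset.mem_filter.mp hp).2]

theorem transpose_clusterIndicator_mul_self [NonAssocSemiring R] (c : V → C) :
    (clusterIndicator R c)ᵀ * clusterIndicator R c =
      diagonal fun l => (Finset.card {p | c p = l} : R) := by
  ext α β
  simp only [mul_clusterIndicator_apply, transpose_apply, clusterIndicator_apply, diagonal_apply,
    Finset.sum_boole, Finset.filter_filter]
  split_ifs with h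
  · simp only [h, and_self]
  · rw [Finset.filter_false_of_mem fun p _ hp => h (hp.2.symm.trans hp.1), Finset.card_empty,
      Nat.cast_zero]

theorem isUnit_transpose_clusterIndicator_mul_self [Fintype C] [CommRing R] {c : V → C}
    (hcard : ∀ l, IsUnit (Finset.card {p | c p = l} : R)) :
    IsUnit ((clusterIndicator R c)ᵀ * clusterIndicator R c) := by
  rw [transpose_clusterIndicator_mul_self, isUnit_diagonal, Pi.isUnit_iff]
  exact hcard

theorem isUnit_card_fiber_of_surjective [DivisionSemiring R] [CharZero R] {c : V → C}
    (hc : Function.Surjective c) (l : C) : IsUnit (Finset.card {p | c p = l} : R) := by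
  obtain ⟨p, hp⟩ := hc l
  rw [isUnit_iff_ne_zero, Nat.cast_ne_zero]
  exact Finset.card_ne_zero_of_mem (Finset.mem_filter.mpr ⟨Finset.mem_univ p, hp⟩)

end ClusterIndicator

section QuotientMatrix

variable {V C R : Type*} [Fintype V] [Fintype C] [DecidableEq C]

/-- The EEP condition: the partition into the fibres of `c` is externally equitable for `L`.
The row sums within a node's own cluster are constrained too; for a Laplacian, whose full row sums
vanish, this follows from the condition on the other clusters. -/
def IsExternallyEquitable [AddCommMonoid R] (c : V → C) (L : Matrix V V R) : Prop :=
  ∀ (β : C) (i j : V), c i = c j → ∑ p with c p = β, L i p = ∑ p with c p = β, L j p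

/-- The quotient matrix `B` of `L` with respect to the indicator matrix `Q`; it is meaningful only
when `Qᵀ * Q` is invertible, the inverse being `0` otherwise. -/
noncomputable def quotientMatrix [CommRing R] (Q : Matrix V C R) (L : Matrix V V R) :
    Matrix C C R :=
  (Qᵀ * Q)⁻¹ * Qᵀ * L * Q

theorem quotientMatrix_eq_of_mul_eq_mul [CommRing R] {Q : Matrix V C R} {L : Matrix V V R}
    {A : Matrix C C R} (hQ : IsUnit (Qᵀ * Q)) (hA : L * Q = Q * A) : quotientMatrix Q L = A :=
  calc (Qᵀ * Q)⁻¹ * Qᵀ * L * Q = (Qᵀ * Q)⁻¹ * Qᵀ * (Q * A) := by rw [Matrix.mul_assoc, hA]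
    _ = (Qᵀ * Q)⁻¹ * (Qᵀ * Q) * A := by simp only [Matrix.mul_assoc]
    _ = A := by rw [nonsing_inv_mul _ ((isUnit_iff_isUnit_det _).mp hQ), Matrix.one_mul]

namespace IsExternallyEquitable

variable {c : V → C} {L : Matrix V V R}

theorem exists_mul_clusterIndicator_eq [NonAssocSemiring R] (hL : IsExternallyEquitable c L) :
    ∃ A : Matrix C C R, L * clusterIndicator R c = clusterIndicator R c * A := by
  have hfactors : Function.FactorsThrough (L * clusterIndicator R c).row c := fun i j hij => by
    ext β
    simpa only [row_apply, mul_clusterIndicator_apply] using hL β i j hij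
  refine ⟨of (Function.extend c (L * clusterIndicator R c).row 0), ?_⟩
  ext i β
  rw [clusterIndicator_mul_apply, of_apply, hfactors.extend_apply, row_apply]

theorem mul_clusterIndicator [CommRing R] (hL : IsExternallyEquitable c L)
    (hcard : ∀ l, IsUnit (Finset.card {p | c p = l} : R)) :
    L * clusterIndicator R c =
      clusterIndicator R c * quotientMatrix (clusterIndicator R c) L := by
  obtain ⟨A, hA⟩ := hL.exists_mul_clusterIndicator_eq
  rw [quotientMatrix_eq_of_mul_eq_mul (isUnit_transpose_clusterIndicator_mul_self hcard) hA, hA]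

end IsExternallyEquitable

end QuotientMatrix

/-- The vector field on `V → E` of a network with node dynamics `F`, output map `H`, coupling
matrix `L` and coupling strength `σ`. -/
def coupledVectorField {V R E : Type*} [Fintype V] [Ring R] [AddCommGroup E] [Module R E]
    (L : Matrix V V R) (σ : R) (F H : E → E) (x : V → E) (i : V) : E :=
  F (x i) - σ • ∑ j, L i j • H (x j)

theorem full_dynamics_reduce_to_quotient_general {V C R E : Type*} [Fintype V] [Fintype C]
    [DecidableEq C] [CommRing R] [AddCommGroup E] [Module R E] {c : V → C} {L : Matrix V V R}
    (hcard : ∀ l, IsUnit (Finset.card {p | c p = l} : R)) (hL : IsExternallyEquitable c L)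
    (σ : R) (F H : E → E) (s : C → E) :
    coupledVectorField L σ F H (s ∘ c) =
      coupledVectorField (quotientMatrix (clusterIndicator R c) L) σ F H s ∘ c := by
  funext i
  have hcoupling : ∑ j, L i j • H (s (c j)) =
      ∑ β, quotientMatrix (clusterIndicator R c) L (c i) β • H (s β) := by
    rw [sum_smul_comp_eq_sum_mul_clusterIndicator_smul L c (fun β => H (s β)),
      hL.mul_clusterIndicator hcard]
    simp only [clusterIndicator_mul_apply]
  simp only [coupledVectorField, Function.comp_apply, hcoupling]

/-- For `L` satisfying the EEP condition with indicator matrix `Q` and quotient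
matrix `B = (QᵀQ)⁻¹ Qᵀ L Q`, the coupled vector field restricted to any cluster-constant
state `x_i = s_{c(i)}` reduces to the quotient dynamics governed by `B`. -/
theorem full_dynamics_reduce_to_quotient
    {N k m : ℕ} (c : Fin N → Fin k) (hc : Function.Surjective c)
    (L : Matrix (Fin N) (Fin N) ℝ)
    (hEEP : ∀ (β : Fin k) (i j : Fin N), c i = c j →
      ∑ p ∈ Finset.univ.filter (fun p => c p = β), L i p =
      ∑ p ∈ Finset.univ.filter (fun p => c p = β), L j p)
    (Q : Matrix (Fin N) (Fin k) ℝ)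
    (hQ : ∀ j l, Q j l = if c j = l then 1 else 0)
    (B : Matrix (Fin k) (Fin k) ℝ)
    (hB : B = (Qᵀ * Q)⁻¹ * Qᵀ * L * Q)
    (σ : ℝ) (F H : (Fin m → ℝ) → (Fin m → ℝ))
    (G : (Fin N → Fin m → ℝ) → (Fin N → Fin m → ℝ))
    (hG : ∀ x i, G x i = F (x i) - σ • ∑ j, L i j • H (x j)) :
    ∀ (s : Fin k → Fin m → ℝ) (i : Fin N),
      G (fun i => s (c i)) i = F (s (c i)) - σ • ∑ β, B (c i) β • H (s β) := by
  obtain rfl : Q = clusterIndicator ℝ c := Matrix.ext hQ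
  subst hB
  exact fun s i => (hG _ i).trans <| congrFun
    (full_dynamics_reduce_to_quotient_general (isUnit_card_fiber_of_surjective hc) hEEP σ F H s) i
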